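/- arXiv:1004.1854 — 4 statements merged into one kernel-verified Lean document; each statement's English description precedes it below -/
import Mathlib

section
/- If every reward function f_e of a network contribution game belongs to class C_0, then a strong equilibrium exists. Concretely, the state in which every player matched by a greedy matching M (edges considered in nonincreasing order of f_e(B_u,B_v) and added whenever the result is still a matching) places its entire budget on its matching edge, and every unmatched player places zero effort on all its edges, is a strong equilibrium. -/
open Finset

/-- A network contribution game on a finite simple undirected graph. -/
structure NCGame (V : Type) [Fintype V] [DecidableEq V] where
  /-- adjacency relation of the (simple, undirected) graph -/
  Adj : V → V → Prop
  adj_symm : ∀ u v, Adj u v → Adj v u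
  adj_irrefl : ∀ v, ¬ Adj v v
  /-- budget of each player -/
  B : V → ℝ
  B_nonneg : ∀ v, 0 ≤ B v
  /-- reward function of each edge; `f u v x y` is the reward of edge `(u,v)`
  when `u` contributes `x` and `v` contributes `y`. -/
  f : V → V → ℝ → ℝ → ℝ
  f_comm : ∀ u v x y, f u v x y = f v u x y
  f_symm : ∀ u v x y, f u v x y = f u v y x
  f_nonneg : ∀ u v x y, 0 ≤ x → 0 ≤ y → 0 ≤ f u v x y
  f_mono : ∀ u v y, 0 ≤ y → MonotoneOn (fun x => f u v x y) (Set.Ici 0)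

variable {V : Type} [Fintype V] [DecidableEq V]

/-- A state: `s v u` is the effort player `v` puts on the edge `(v,u)`.
It is valid if efforts are nonnegative, supported on edges, and within budget. -/
def validState (g : NCGame V) (s : V → V → ℝ) : Prop :=
  (∀ v u, 0 ≤ s v u) ∧ (∀ v u, ¬ g.Adj v u → s v u = 0) ∧
  (∀ v, ∑ u, s v u ≤ g.B v)

open Classical in
/-- utility of player `v` -/
noncomputable def util (g : NCGame V) (s : V → V → ℝ) (v : V) : ℝ :=
  ∑ u, if g.Adj v u then g.f v u (s v u) (s u v) else 0

/-- social welfare -/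
noncomputable def welfare (g : NCGame V) (s : V → V → ℝ) : ℝ :=
  ∑ v, util g s v

/-- Nash equilibrium: no unilateral improving deviation. -/
def IsNashEq (g : NCGame V) (s : V → V → ℝ) : Prop :=
  validState g s ∧
  ∀ v (t : V → ℝ), validState g (Function.update s v t) →
    util g (Function.update s v t) v ≤ util g s v

/-- Pairwise equilibrium: Nash and no bilateral improving deviation. -/
def IsPairwiseEq (g : NCGame V) (s : V → V → ℝ) : Prop :=
  IsNashEq g s ∧
  ∀ u v (tu tv : V → ℝ), u ≠ v →
    validState g (Function.update (Function.update s u tu) v tv) →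
    ¬(util g s u < util g (Function.update (Function.update s u tu) v tv) u ∧
      util g s v < util g (Function.update (Function.update s u tu) v tv) v)

/-- Strong equilibrium: no coalition has a joint deviation strictly improving
the utility of all its members. -/
def IsStrongEq (g : NCGame V) (s : V → V → ℝ) : Prop :=
  validState g s ∧
  ∀ (C : Finset V) (s' : V → V → ℝ), C.Nonempty → validState g s' →
    (∀ v, v ∉ C → s' v = s v) →
    ∃ v ∈ C, util g s' v ≤ util g s v

/-- class `C`: symmetric, nonnegative, nondecreasing, coordinate-convex. -/
def InClassC (f : ℝ → ℝ → ℝ) : Prop :=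
  (∀ x y, 0 ≤ x → 0 ≤ y → 0 ≤ f x y) ∧
  (∀ x y, f x y = f y x) ∧
  (∀ y, 0 ≤ y → MonotoneOn (fun x => f x y) (Set.Ici 0)) ∧
  (∀ y, 0 ≤ y → ConvexOn ℝ (Set.Ici 0) (fun x => f x y))

/-- class `C₀`: members of `C` vanishing when one argument is `0`. -/
def InClassC0 (f : ℝ → ℝ → ℝ) : Prop :=
  InClassC f ∧ ∀ x, 0 ≤ x → f x 0 = 0

/-- An edge is tight in `s` if both endpoints contribute `0` or their full budget. -/
def tightState (g : NCGame V) (s : V → V → ℝ) : Prop :=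
  ∀ u v, g.Adj u v → s u v = 0 ∨ s u v = g.B u

/-- maximum possible reward of an edge: both endpoints contribute their full budget -/
noncomputable def maxReward (g : NCGame V) (e : V × V) : ℝ :=
  g.f e.1 e.2 (g.B e.1) (g.B e.2)

/-- one step of the greedy matching: add the edge `e` if it is disjoint
from all previously chosen edges. -/
def greedyStep (acc : List (V × V)) (e : V × V) : List (V × V) :=
  if ∀ e' ∈ acc, e'.1 ≠ e.1 ∧ e'.1 ≠ e.2 ∧ e'.2 ≠ e.1 ∧ e'.2 ≠ e.2
  then acc ++ [e] else acc

/-- the greedy matching obtained by scanning the list of edges `L`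
(sorted nonincreasingly by maximum reward) in order. -/
def greedyMatching (L : List (V × V)) : List (V × V) := L.foldl greedyStep []

/-- the state where every player matched by `M` puts its whole budget on its
matching edge, and all other efforts are `0`. -/
noncomputable def matchedState (g : NCGame V) (M : List (V × V)) : V → V → ℝ :=
  fun v u => if (v, u) ∈ M ∨ (u, v) ∈ M then g.B v else 0

def Disj (e' e : V × V) : Prop := e'.1 ≠ e.1 ∧ e'.1 ≠ e.2 ∧ e'.2 ≠ e.1 ∧ e'.2 ≠ e.2

theorem greedy_aux (r : V × V → ℝ) (L : List (V × V)) : ∀ (acc : List (V × V)),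
    L.Pairwise (fun e e' => r e' ≤ r e) →
    (∀ a ∈ acc, ∀ e ∈ L, r e ≤ r a) →
    (∀ a ∈ acc, ∀ b ∈ acc, a = b ∨ Disj a b) →
    (∀ a ∈ acc, a ∈ L.foldl greedyStep acc) ∧
    (∀ a ∈ L.foldl greedyStep acc, a ∈ acc ∨ a ∈ L) ∧
    (∀ a ∈ L.foldl greedyStep acc, ∀ b ∈ L.foldl greedyStep acc, a = b ∨ Disj a b) ∧
    (∀ e ∈ L, ∃ a ∈ L.foldl greedyStep acc, r e ≤ r a ∧ (a = e ∨ ¬ Disj a e)) := by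
  induction L with
  | nil => intro acc _ _ h; simpa using h
  | cons e L ih =>
    intro acc hs hr hd
    rw [List.pairwise_cons] at hs
    rw [List.foldl_cons]
    by_cases hc : ∀ e' ∈ acc, Disj e' e
    · have hst : greedyStep acc e = acc ++ [e] := if_pos hc
      rw [hst]
      obtain ⟨h1, h2, h3, h4⟩ := ih (acc ++ [e]) hs.2
        (by
          intro a ha b hb
          rcases List.mem_append.1 ha with ha | ha
          · exact hr a ha b (List.mem_cons_of_mem _ hb)
          · rw [List.mem_singleton.1 ha]; exact hs.1 b hb)
        (by
          intro a ha b hb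
          rcases List.mem_append.1 ha with ha | ha <;> rcases List.mem_append.1 hb with hb | hb
          · exact hd a ha b hb
          · rw [List.mem_singleton.1 hb]; exact Or.inr (hc a ha)
          · rw [List.mem_singleton.1 ha]
            obtain ⟨p, q, s, t⟩ := hc b hb
            exact Or.inr ⟨p.symm, s.symm, q.symm, t.symm⟩
          · rw [List.mem_singleton.1 ha, List.mem_singleton.1 hb]; exact Or.inl rfl)
      refine ⟨fun a ha => h1 a (by simp [ha]), ?_, h3, ?_⟩
      · intro a ha
        have := h2 a ha
        simp at this ⊢; tauto
      · intro b hb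
        rcases List.mem_cons.1 hb with rfl | hb
        · exact ⟨b, h1 b (by simp), le_rfl, Or.inl rfl⟩
        · exact h4 b hb
    · have hst : greedyStep acc e = acc := if_neg hc
      rw [hst]
      obtain ⟨h1, h2, h3, h4⟩ := ih acc hs.2
        (fun a ha b hb => hr a ha b (List.mem_cons_of_mem _ hb)) hd
      refine ⟨h1, ?_, h3, ?_⟩
      · intro a ha
        have := h2 a ha
        simp at this ⊢; tauto
      · intro b hb
        rcases List.mem_cons.1 hb with rfl | hb
        · push Not at hc
          obtain ⟨a, ha, hab⟩ := hc
          exact ⟨a, h1 a ha, hr a ha b (by simp), Or.inr hab⟩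
        · exact h4 b hb

theorem maxReward_swap (g : NCGame V) (u v : V) :
    maxReward g (u, v) = maxReward g (v, u) := by
  simp only [maxReward]
  rw [g.f_comm, g.f_symm]

theorem util_ge (g : NCGame V) (s : V → V → ℝ) (hs : ∀ v u, 0 ≤ s v u) (v u : V)
    (h : g.Adj v u) : g.f v u (s v u) (s u v) ≤ util g s v := by
  classical
  unfold util
  have := Finset.single_le_sum (s := Finset.univ)
    (f := fun u => if g.Adj v u then g.f v u (s v u) (s u v) else 0)
    (fun i _ => by
      split_ifs
      · exact g.f_nonneg _ _ _ _ (hs _ _) (hs _ _)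
      · exact le_rfl) (Finset.mem_univ u)
  simpa [h] using this

theorem scale (f : ℝ → ℝ → ℝ) (hf : InClassC0 f) (x y b c : ℝ) (hx : 0 ≤ x) (hxb : x ≤ b)
    (hy : 0 ≤ y) (hyc : y ≤ c) (hb : 0 < b) : f x y ≤ x / b * f b c := by
  obtain ⟨⟨hn, hsy, hm, hcv⟩, h0⟩ := hf
  have hx1 : x / b ≤ 1 := (div_le_one hb).2 hxb
  have hx0 : 0 ≤ x / b := by positivity
  have h1 := (hcv y hy).2 (x := b) (y := 0) hb.le (Set.mem_Ici.2 le_rfl) hx0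
    (sub_nonneg.2 hx1) (by ring)
  have h2 : f 0 y = 0 := by rw [hsy]; exact h0 y hy
  have h3 : f b y ≤ f b c := by
    rw [hsy b y, hsy b c]; exact hm b hb.le hy (hy.trans hyc) hyc
  have h4 : x / b * b = x := by field_simp
  simp only [smul_eq_mul, mul_zero, add_zero, h2, h4] at h1
  exact h1.trans (mul_le_mul_of_nonneg_left h3 hx0)

theorem classC0_main (g : NCGame V)
    (hC : ∀ u v, g.Adj u v → InClassC0 (g.f u v))
    (L : List (V × V))
    (hLadj : ∀ e ∈ L, g.Adj e.1 e.2)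
    (hLcover : ∀ u v, g.Adj u v → (u, v) ∈ L ∨ (v, u) ∈ L)
    (hLsorted : L.Pairwise fun e e' => maxReward g e' ≤ maxReward g e) :
    IsStrongEq g (matchedState g (greedyMatching L)) := by
  classical
  obtain ⟨-, h2, h3, h4⟩ := greedy_aux (maxReward g) L [] hLsorted (by simp) (by simp)
  change ∀ a ∈ greedyMatching L, _ at h2
  change ∀ a ∈ greedyMatching L, ∀ b ∈ greedyMatching L, _ at h3
  change ∀ e ∈ L, ∃ a ∈ greedyMatching L, _ at h4
  set M := greedyMatching L
  have hMadj : ∀ e ∈ M, g.Adj e.1 e.2 := fun e he => by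
    rcases h2 e he with h | h
    · simp at h
    · exact hLadj e h
  have hmadj : ∀ v u, ((v, u) ∈ M ∨ (u, v) ∈ M) → g.Adj v u := by
    rintro v u (h | h)
    · exact hMadj _ h
    · exact g.adj_symm _ _ (hMadj _ h)
  have huniq : ∀ v u u', ((v, u) ∈ M ∨ (u, v) ∈ M) → ((v, u') ∈ M ∨ (u', v) ∈ M) →
      u = u' := by
    intro v u u' h h'
    rcases h with h | h <;> rcases h' with h' | h' <;>
      have h5 := h3 _ h _ h' <;> simp [Disj] at h5 <;> grind
  have hnn : ∀ v u, 0 ≤ matchedState g M v u := fun v u => by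
    unfold matchedState; split_ifs
    · exact g.B_nonneg v
    · exact le_rfl
  have hmu : ∀ v u, ((v, u) ∈ M ∨ (u, v) ∈ M) →
      maxReward g (v, u) ≤ util g (matchedState g M) v := by
    intro v u h
    have := util_ge g _ hnn v u (hmadj v u h)
    have e1 : matchedState g M v u = g.B v := if_pos h
    have e2 : matchedState g M u v = g.B u := if_pos h.symm
    rw [e1, e2] at this
    exact this
  have hblock : ∀ v u, g.Adj v u → maxReward g (v, u) ≤ util g (matchedState g M) v ∨
      maxReward g (v, u) ≤ util g (matchedState g M) u := by
    have key : ∀ v u, (v, u) ∈ L → maxReward g (v, u) ≤ util g (matchedState g M) v ∨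
      maxReward g (v, u) ≤ util g (matchedState g M) u := by
      intro v u h
      obtain ⟨⟨a, b⟩, ha, hr, hd⟩ := h4 _ h
      have hA := hmu a b (Or.inl ha)
      have hB := hmu b a (Or.inr ha)
      rw [maxReward_swap] at hB
      have : a = v ∨ a = u ∨ b = v ∨ b = u := by
        simp only [Disj, Prod.mk.injEq] at hd; tauto
      rcases this with rfl | rfl | rfl | rfl
      · exact Or.inl (hr.trans hA)
      · exact Or.inr (hr.trans hA)
      · exact Or.inl (hr.trans hB)
      · exact Or.inr (hr.trans hB)
    intro v u h
    rcases hLcover v u h with h | h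
    · exact key v u h
    · rw [maxReward_swap]; exact (key u v h).symm
  refine ⟨⟨hnn, fun v u h => if_neg fun h' => h (hmadj v u h'), fun v => ?_⟩, ?_⟩
  · by_cases h : ∃ u, (v, u) ∈ M ∨ (u, v) ∈ M
    · obtain ⟨u, hu⟩ := h
      rw [Finset.sum_eq_single u]
      · exact (if_pos hu).le
      · intro b _ hb
        exact if_neg fun h' => hb (huniq v b u h' hu)
      · simp
    · push Not at h
      rw [Finset.sum_eq_zero]
      · exact g.B_nonneg v
      · intro u _
        exact if_neg (by have := h u; tauto)
  · intro C s' hne hv' hout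
    obtain ⟨v, hvC, hmax⟩ := C.exists_max_image (util g (matchedState g M)) hne
    refine ⟨v, hvC, ?_⟩
    obtain ⟨hp, -, hb⟩ := hv'
    have hle : ∀ v u, s' v u ≤ g.B v := fun v u =>
      (Finset.single_le_sum (f := s' v) (fun i _ => hp v i) (Finset.mem_univ u)).trans (hb v)
    have hU : 0 ≤ util g (matchedState g M) v := by
      unfold util
      refine Finset.sum_nonneg fun i _ => ?_
      split_ifs
      · exact g.f_nonneg _ _ _ _ (hnn _ _) (hnn _ _)
      · exact le_rfl
    have hz : ∀ u x, 0 ≤ x → g.Adj v u → g.f v u x 0 = 0 := fun u x hx h => (hC v u h).2 x hx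
    rcases (g.B_nonneg v).eq_or_lt with hB | hB
    · have : util g s' v = 0 := by
        unfold util
        refine Finset.sum_eq_zero fun u _ => ?_
        split_ifs with h
        · have : s' v u = 0 := le_antisymm (hB ▸ hle v u) (hp v u)
          rw [this, g.f_symm]; exact hz u _ (hp u v) h
        · rfl
      rw [this]; exact hU
    · have hterm : ∀ u, (if g.Adj v u then g.f v u (s' v u) (s' u v) else 0) ≤
          s' v u / g.B v * util g (matchedState g M) v := by
        intro u
        have hx0 : 0 ≤ s' v u / g.B v := div_nonneg (hp v u) hB.le
        split_ifs with h
        · have hsc := scale _ (hC v u h) (s' v u) (s' u v) (g.B v) (g.B u) (hp v u) (hle v u)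
            (hp u v) (hle u v) hB
          have fin : maxReward g (v, u) ≤ util g (matchedState g M) v →
              g.f v u (s' v u) (s' u v) ≤ s' v u / g.B v * util g (matchedState g M) v :=
            fun h => hsc.trans (mul_le_mul_of_nonneg_left h hx0)
          by_cases huC : u ∈ C
          · rcases hblock v u h with h' | h'
            · exact fin h'
            · exact fin (h'.trans (hmax u huC))
          · by_cases hm : (v, u) ∈ M ∨ (u, v) ∈ M
            · exact fin (hmu v u hm)
            · have : s' u v = 0 := by
                rw [hout u huC]; exact if_neg fun h' => hm h'.symm
              rw [this, hz u _ (hp v u) h]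
              exact mul_nonneg hx0 hU
        · exact mul_nonneg hx0 hU
      calc util g s' v ≤ ∑ u, s' v u / g.B v * util g (matchedState g M) v :=
            Finset.sum_le_sum fun u _ => hterm u
        _ = (∑ u, s' v u) / g.B v * util g (matchedState g M) v := by
            rw [← Finset.sum_mul, Finset.sum_div]
        _ ≤ 1 * util g (matchedState g M) v :=
            mul_le_mul_of_nonneg_right ((div_le_one hB).2 (hb v)) hU
        _ = _ := one_mul _

/-- if all reward functions lie in class `C₀`, a strong
equilibrium exists; concretely the greedy-matching state is one. -/
theorem classC0_strong_exists (g : NCGame V)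
    (hC : ∀ u v, g.Adj u v → InClassC0 (g.f u v))
    (L : List (V × V))
    (hLadj : ∀ e ∈ L, g.Adj e.1 e.2)
    (hLcover : ∀ u v, g.Adj u v → (u, v) ∈ L ∨ (v, u) ∈ L)
    (hLnodup : L.Pairwise fun e e' => e ≠ e' ∧ e ≠ (e'.2, e'.1))
    (hLsorted : L.Pairwise fun e e' => maxReward g e' ≤ maxReward g e) :
    (∃ s, IsStrongEq g s) ∧
    IsStrongEq g (matchedState g (greedyMatching L)) := by
  exact ⟨⟨_, classC0_main g hC L hLadj hLcover hLsorted⟩,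
    classC0_main g hC L hLadj hLcover hLsorted⟩
end

section
/- If every reward function of a network contribution game belongs to class C' (strictly coordinate-convex), then every pairwise equilibrium is tight, i.e., in every pairwise equilibrium s, every edge e=(u,v) satisfies s_u(e) ∈ {0, B_u} and s_v(e) ∈ {0, B_v}. -/
open Finset

variable {V : Type} [Fintype V] [DecidableEq V]

theorem util_update_aux (g : NCGame V) (s : V → V → ℝ) (u : V) (t : V → ℝ) :
    util g (Function.update s u t) u =
      (open Classical in ∑ w, if g.Adj u w then g.f u w (t w) (s w u) else 0) := by
  classical
  unfold util
  refine Finset.sum_congr rfl fun w _ => ?_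
  by_cases h : g.Adj u w
  · have hne : w ≠ u := by
      rintro rfl
      exact g.adj_irrefl _ h
    simp [h, Function.update_of_ne hne]
  · simp [h]

theorem valid_update_aux (g : NCGame V) (s : V → V → ℝ) (hs : validState g s) (u : V)
    (t : V → ℝ) (h0 : ∀ w, 0 ≤ t w) (h1 : ∀ w, ¬ g.Adj u w → t w = 0)
    (h2 : ∑ w, t w ≤ g.B u) : validState g (Function.update s u t) := by
  obtain ⟨a, b, c⟩ := hs
  refine ⟨fun x w => ?_, fun x w => ?_, fun x => ?_⟩
  all_goals
    by_cases hx : x = u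
    · subst hx
      simp only [Function.update_self]
      first | exact h0 w | exact h1 w | exact h2
    · simp only [Function.update_of_ne hx]
      first | exact a x w | exact b x w | exact c x

theorem mid_aux (φ : ℝ → ℝ) (h : StrictConvexOn ℝ (Set.Ici 0) φ) (x d : ℝ)
    (h1 : 0 ≤ x + d) (h2 : 0 ≤ x - d) (hd : d ≠ 0) :
    2 * φ x < φ (x + d) + φ (x - d) := by
  have hne : x + d ≠ x - d := fun h => hd (by linarith)
  have := h.2 (Set.mem_Ici.2 h1) (Set.mem_Ici.2 h2) hne
    (by norm_num : (0:ℝ) < 1/2) (by norm_num : (0:ℝ) < 1/2) (by norm_num)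
  simp only [smul_eq_mul] at this
  have e : 1/2 * (x + d) + 1/2 * (x - d) = x := by ring
  rw [e] at this
  linarith

theorem key_aux (g : NCGame V)
    (hstrict : ∀ u v, g.Adj u v → ∀ y, 0 ≤ y →
      StrictConvexOn ℝ (Set.Ici 0) (fun x => g.f u v x y))
    (s : V → V → ℝ) (hs : IsNashEq g s) (u v : V) (huv : g.Adj u v) (δ : V → ℝ)
    (hv : δ v ≠ 0) (hp : ∀ w, 0 ≤ s u w + δ w) (hm : ∀ w, 0 ≤ s u w - δ w)
    (hz : ∀ w, ¬ g.Adj u w → δ w = 0)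
    (hsp : ∑ w, s u w + ∑ w, δ w ≤ g.B u) (hsm : ∑ w, s u w - ∑ w, δ w ≤ g.B u) : False := by
  classical
  obtain ⟨hval, hN⟩ := hs
  have A := hN u (fun w => s u w + δ w) (valid_update_aux g s hval u _ hp
    (fun w hw => by simp [hz w hw, hval.2.1 u w hw]) (by rw [Finset.sum_add_distrib]; exact hsp))
  have C := hN u (fun w => s u w - δ w) (valid_update_aux g s hval u _ hm
    (fun w hw => by simp [hz w hw, hval.2.1 u w hw]) (by rw [Finset.sum_sub_distrib]; exact hsm))
  rw [util_update_aux] at A C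
  have D : 2 * util g s u <
      (∑ w, if g.Adj u w then g.f u w (s u w + δ w) (s w u) else 0) +
      (∑ w, if g.Adj u w then g.f u w (s u w - δ w) (s w u) else 0) := by
    unfold util
    rw [Finset.mul_sum, ← Finset.sum_add_distrib]
    have hlt : ∀ w, g.Adj u w → δ w ≠ 0 → 2 * g.f u w (s u w) (s w u) <
        g.f u w (s u w + δ w) (s w u) + g.f u w (s u w - δ w) (s w u) := fun w hw hd =>
      mid_aux (fun x => g.f u w x (s w u)) (hstrict u w hw _ (hval.1 w u)) _ _ (hp w) (hm w) hd
    refine Finset.sum_lt_sum (fun w _ => ?_) ⟨v, Finset.mem_univ _, ?_⟩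
    · by_cases hw : g.Adj u w
      · by_cases hd : δ w = 0
        · simp [hw, hd, two_mul]
        · simpa [hw] using (hlt w hw hd).le
      · simp [hw]
    · simpa [huv] using hlt v huv hv
  have A' : (∑ w, if g.Adj u w then g.f u w (s u w + δ w) (s w u) else 0) ≤ util g s u := by
    convert A
  have C' : (∑ w, if g.Adj u w then g.f u w (s u w - δ w) (s w u) else 0) ≤ util g s u := by
    convert C
  linarith

/-- with strictly coordinate-convex class-`C'` rewards, every
pairwise equilibrium is tight. -/
theorem classC'_pairwise_eq_tight (g : NCGame V)
    (hC : ∀ u v, g.Adj u v → InClassC (g.f u v))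
    (hstrict : ∀ u v, g.Adj u v → ∀ y, 0 ≤ y →
      StrictConvexOn ℝ (Set.Ici 0) (fun x => g.f u v x y))
    (s : V → V → ℝ) (hs : IsPairwiseEq g s) :
    tightState g s := by
  classical
  intro u v huv
  by_contra hcon
  push Not at hcon
  obtain ⟨hne0, hneB⟩ := hcon
  have hN := hs.1
  obtain ⟨h0, hz, hB⟩ := hs.1.1
  have hpos : 0 < s u v := lt_of_le_of_ne (h0 u v) (Ne.symm hne0)
  by_cases hw : ∃ w, w ≠ v ∧ 0 < s u w
  · obtain ⟨w, hwv, hwpos⟩ := hw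
    have hadj : g.Adj u w := by
      by_contra h
      exact hwpos.ne' (hz u w h)
    obtain ⟨d, hd, hdv, hdw⟩ : ∃ d : ℝ, 0 < d ∧ d ≤ s u v ∧ d ≤ s u w :=
      ⟨min (s u v) (s u w), lt_min hpos hwpos, min_le_left _ _, min_le_right _ _⟩
    have hsum : ∑ x, ((if x = v then d else 0) - (if x = w then d else 0)) = 0 := by
      simp [Finset.sum_sub_distrib]
    refine key_aux g hstrict s hN u v huv
      (fun x => (if x = v then d else 0) - (if x = w then d else 0)) ?_ ?_ ?_ ?_ ?_ ?_
    · simp [hwv.symm, hd.ne']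
    · intro x
      have := h0 u x
      split_ifs <;> subst_vars <;> linarith
    · intro x
      have := h0 u x
      split_ifs <;> subst_vars <;> linarith
    · intro x hx
      have h1 : x ≠ v := by rintro rfl; exact hx huv
      have h2 : x ≠ w := by rintro rfl; exact hx hadj
      simp [h1, h2]
    · rw [hsum]; linarith [hB u]
    · rw [hsum]; linarith [hB u]
  · push Not at hw
    have hsu : ∑ x, s u x = s u v :=
      Finset.sum_eq_single v (fun x _ hx => le_antisymm (hw x hx) (h0 u x)) (by simp)
    have hlt : s u v < g.B u := lt_of_le_of_ne (hsu ▸ hB u) hneB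
    obtain ⟨d, hd, hdv, hdB⟩ : ∃ d : ℝ, 0 < d ∧ d ≤ s u v ∧ d ≤ g.B u - s u v :=
      ⟨min (s u v) (g.B u - s u v), lt_min hpos (by linarith), min_le_left _ _, min_le_right _ _⟩
    have hsum : ∑ x, (if x = v then d else 0) = d := by simp
    refine key_aux g hstrict s hN u v huv (fun x => if x = v then d else 0) ?_ ?_ ?_ ?_ ?_ ?_
    · simp [hd.ne']
    · intro x
      have := h0 u x
      split_ifs <;> linarith
    · intro x
      have := h0 u x
      split_ifs <;> subst_vars <;> linarith
    · intro x hx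
      have h1 : x ≠ v := by rintro rfl; exact hx huv
      simp [h1]
    · rw [hsum, hsu]; linarith
    · rw [hsum, hsu]; linarith
end

section
/- Suppose every reward function of a network contribution game has the form f_e(x,y) = c_e·min(x,y) with a constant c_e > 0. Then every pairwise equilibrium s satisfies w(s*) ≤ 2·w(s) for every state s*; i.e., the price of anarchy for pairwise equilibria is at most 2. -/
open Finset

variable {V : Type} [Fintype V] [DecidableEq V]

/-- move `d` units of effort to `v`, scaling the rest down -/
noncomputable def devRow (r : V → ℝ) (b : ℝ) (v : V) (d : ℝ) : V → ℝ :=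
  fun x => if x = v then r v + d else (1 - d / (b - r v)) * r x

lemma devRow_valid (g : NCGame V) (s : V → V → ℝ) (hs : validState g s) (u v : V)
    (huv : g.Adj u v) (d : ℝ) (hd : 0 < d) (hd' : d ≤ g.B u - s u v) :
    validState g (Function.update s u (devRow (s u) (g.B u) v d)) := by
  obtain ⟨h0, h1, h2⟩ := hs
  have hpos : 0 < g.B u - s u v := lt_of_lt_of_le hd hd'
  have he : d / (g.B u - s u v) ≤ 1 := (div_le_one hpos).2 hd'
  refine ⟨?_, ?_, ?_⟩
  · intro x y
    by_cases hx : x = u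
    · subst hx
      simp only [Function.update_self, devRow]
      split_ifs
      · linarith [h0 x v]
      · exact mul_nonneg (by linarith) (h0 _ _)
    · rw [Function.update_of_ne hx]; exact h0 x y
  · intro x y hxy
    by_cases hx : x = u
    · subst hx
      simp only [Function.update_self, devRow]
      split_ifs with h
      · subst h; exact absurd huv hxy
      · rw [h1 _ _ hxy, mul_zero]
    · rw [Function.update_of_ne hx]; exact h1 x y hxy
  · intro x
    by_cases hx : x = u
    · subst hx
      simp only [Function.update_self]
      have e1 := Finset.add_sum_erase univ (s x) (mem_univ v)
      rw [← Finset.add_sum_erase univ _ (mem_univ v)]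
      have e2 : ∑ y ∈ univ.erase v, devRow (s x) (g.B x) v d y
          = (1 - d / (g.B x - s x v)) * ∑ y ∈ univ.erase v, s x y := by
        rw [Finset.mul_sum]
        refine Finset.sum_congr rfl fun y hy => ?_
        simp [devRow, Finset.ne_of_mem_erase hy]
      rw [e2]
      have e3 : ∑ y ∈ univ.erase v, s x y ≤ g.B x - s x v := by linarith [h2 x]
      have e4 := mul_le_mul_of_nonneg_left e3 (sub_nonneg.2 he)
      have e5 : (1 - d / (g.B x - s x v)) * (g.B x - s x v) = g.B x - s x v - d := by
        field_simp
      have e6 : devRow (s x) (g.B x) v d v = s x v + d := by simp [devRow]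
      rw [e6]; linarith
    · rw [Function.update_of_ne hx]; exact h2 x

lemma util_ge_edge (g : NCGame V) (s : V → V → ℝ) (hs : validState g s) (u v : V)
    (huv : g.Adj u v) : g.f u v (s u v) (s v u) ≤ util g s u := by
  classical
  unfold util
  have := Finset.single_le_sum (s := univ)
    (f := fun x => if g.Adj u x then g.f u x (s u x) (s x u) else 0)
    (fun x _ => by
      split_ifs
      · exact g.f_nonneg _ _ _ _ (hs.1 _ _) (hs.1 _ _)
      · exact le_rfl) (mem_univ v)
  simp only [huv, if_true] at this
  convert this

lemma dev_improves (g : NCGame V)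
    (c : V → V → ℝ) (hc : ∀ u v, g.Adj u v → 0 < c u v)
    (hf : ∀ u v, g.Adj u v → ∀ x y, g.f u v x y = c u v * min x y)
    (s s' : V → V → ℝ) (hs : validState g s) (u v : V) (huv : g.Adj u v)
    (d : ℝ) (hd : 0 < d) (hd' : d ≤ g.B u - s u v)
    (hle : s u v ≤ s v u) (hw : util g s u < c u v * g.B u)
    (hu : s' u = devRow (s u) (g.B u) v d)
    (hx : ∀ x, x ≠ u → x ≠ v → s' x = s x) (hv : s u v + d ≤ s' v u) :
    util g s u < util g s' u := by
  classical
  have hpos : 0 < g.B u - s u v := lt_of_lt_of_le hd hd'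
  have he : d / (g.B u - s u v) ≤ 1 := (div_le_one hpos).2 hd'
  have he0 : 0 < d / (g.B u - s u v) := div_pos hd hpos
  have hed : d / (g.B u - s u v) * (g.B u - s u v) = d := by field_simp
  set ε := d / (g.B u - s u v) with hε
  have a1 : util g s u = c u v * s u v + ∑ x ∈ univ.erase v,
      (if g.Adj u x then g.f u x (s u x) (s x u) else 0) := by
    unfold util
    rw [← Finset.add_sum_erase univ _ (mem_univ v), if_pos huv, hf u v huv, min_eq_left hle]
  have a2 : util g s' u = c u v * (s u v + d) + ∑ x ∈ univ.erase v,
      (if g.Adj u x then g.f u x (s' u x) (s' x u) else 0) := by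
    unfold util
    rw [← Finset.add_sum_erase univ _ (mem_univ v), if_pos huv, hf u v huv]
    have : s' u v = s u v + d := by rw [hu]; simp [devRow]
    rw [this, min_eq_left hv]
  have a3 : (1 - ε) * ∑ x ∈ univ.erase v,
      (if g.Adj u x then g.f u x (s u x) (s x u) else 0) ≤ ∑ x ∈ univ.erase v,
      (if g.Adj u x then g.f u x (s' u x) (s' x u) else 0) := by
    rw [Finset.mul_sum]
    refine Finset.sum_le_sum fun x hxm => ?_
    have hxv := Finset.ne_of_mem_erase hxm
    split_ifs with h
    · have hxu : x ≠ u := by rintro rfl; exact g.adj_irrefl _ h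
      rw [hf u x h, hf u x h, hx x hxu hxv]
      have : s' u x = (1 - ε) * s u x := by rw [hu]; simp [devRow, hxv, hε]
      rw [this, mul_left_comm]
      refine mul_le_mul_of_nonneg_left ?_ (hc u x h).le
      refine le_min (mul_le_mul_of_nonneg_left (min_le_left _ _) (by linarith)) ?_
      have h1 := hs.1 x u
      have h2 := min_le_right (s u x) (s x u)
      have h3 := le_min (hs.1 u x) (hs.1 x u)
      nlinarith
    · simp
  nlinarith [mul_pos he0 (sub_pos.2 hw), hc u v huv]

lemma c_symm (g : NCGame V) (c : V → V → ℝ)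
    (hf : ∀ u v, g.Adj u v → ∀ x y, g.f u v x y = c u v * min x y) (u v : V)
    (huv : g.Adj u v) : c u v = c v u := by
  have h := g.f_comm u v 1 1
  rw [hf u v huv, hf v u (g.adj_symm _ _ huv)] at h
  simpa using h

lemma slack_pos (g : NCGame V) (c : V → V → ℝ) (hc : ∀ u v, g.Adj u v → 0 < c u v)
    (hf : ∀ u v, g.Adj u v → ∀ x y, g.f u v x y = c u v * min x y)
    (s : V → V → ℝ) (hs : validState g s) (u v : V) (huv : g.Adj u v)
    (hle : s u v ≤ s v u) (hw : util g s u < c u v * g.B u) : 0 < g.B u - s u v := by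
  have h := util_ge_edge g s hs u v huv
  rw [hf u v huv, min_eq_left hle] at h
  have := lt_of_mul_lt_mul_left (lt_of_le_of_lt h hw) (hc u v huv).le
  linarith

lemma nash_case (g : NCGame V) (c : V → V → ℝ) (hc : ∀ u v, g.Adj u v → 0 < c u v)
    (hf : ∀ u v, g.Adj u v → ∀ x y, g.f u v x y = c u v * min x y)
    (s : V → V → ℝ) (hs : IsNashEq g s) (u v : V) (huv : g.Adj u v)
    (hlt : s u v < s v u) : c u v * g.B u ≤ util g s u := by
  by_contra! hw
  have hp := slack_pos g c hc hf s hs.1 u v huv hlt.le hw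
  have hne : v ≠ u := by rintro rfl; exact g.adj_irrefl _ huv
  have hd : 0 < min (g.B u - s u v) (s v u - s u v) := lt_min hp (by linarith)
  have h1 := hs.2 u _ (devRow_valid g s hs.1 u v huv _ hd (min_le_left _ _))
  refine absurd h1 (not_le.2 ?_)
  refine dev_improves g c hc hf s _ hs.1 u v huv _ hd (min_le_left _ _) hlt.le hw
    (Function.update_self _ _ _) (fun x hx _ => Function.update_of_ne hx _ _) ?_
  rw [Function.update_of_ne hne]
  linarith [min_le_right (g.B u - s u v) (s v u - s u v)]

lemma edge_charge (g : NCGame V) (c : V → V → ℝ) (hc : ∀ u v, g.Adj u v → 0 < c u v)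
    (hf : ∀ u v, g.Adj u v → ∀ x y, g.f u v x y = c u v * min x y)
    (s : V → V → ℝ) (hs : IsPairwiseEq g s) (u v : V) (huv : g.Adj u v) :
    c u v * g.B u ≤ util g s u ∨ c u v * g.B v ≤ util g s v := by
  have hvu := g.adj_symm _ _ huv
  have hcs := c_symm g c hf u v huv
  have hne : u ≠ v := by rintro rfl; exact g.adj_irrefl _ huv
  rcases lt_trichotomy (s u v) (s v u) with h | h | h
  · exact Or.inl (nash_case g c hc hf s hs.1 u v huv h)
  · by_contra! hw
    obtain ⟨hwu, hwv⟩ := hw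
    have hwv' := hwv
    rw [hcs] at hwv'
    have hval := hs.1.1
    have hpu := slack_pos g c hc hf s hval u v huv h.le hwu
    have hpv := slack_pos g c hc hf s hval v u hvu h.ge hwv'
    obtain ⟨d, hd, hdu, hdv⟩ : ∃ d, 0 < d ∧ d ≤ g.B u - s u v ∧ d ≤ g.B v - s v u :=
      ⟨_, lt_min hpu hpv, min_le_left _ _, min_le_right _ _⟩
    have v1 := devRow_valid g s hval u v huv d hd hdu
    have hrow : Function.update s u (devRow (s u) (g.B u) v d) v = s v :=
      Function.update_of_ne hne.symm _ _
    have v2 := devRow_valid g _ v1 v u hvu d hd (by rw [hrow]; exact hdv)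
    rw [hrow] at v2
    have eu : Function.update (Function.update s u (devRow (s u) (g.B u) v d)) v
        (devRow (s v) (g.B v) u d) u = devRow (s u) (g.B u) v d := by
      rw [Function.update_of_ne hne, Function.update_self]
    have ev : Function.update (Function.update s u (devRow (s u) (g.B u) v d)) v
        (devRow (s v) (g.B v) u d) v = devRow (s v) (g.B v) u d := by
      rw [Function.update_self]
    refine hs.2 u v _ _ hne v2 ⟨?_, ?_⟩
    · refine dev_improves g c hc hf s _ hval u v huv d hd hdu h.le hwu eu ?_ ?_
      · intro x hx hx'
        rw [Function.update_of_ne hx', Function.update_of_ne hx]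
      · rw [ev]; simp [devRow, h]
    · refine dev_improves g c hc hf s _ hval v u hvu d hd hdv h.ge hwv' ev ?_ ?_
      · intro x hx hx'
        rw [Function.update_of_ne hx, Function.update_of_ne hx']
      · rw [eu]; simp [devRow, h]
  · right
    rw [hcs]
    exact nash_case g c hc hf s hs.1 v u hvu h

lemma util_nonneg' (g : NCGame V) (s : V → V → ℝ) (hs : validState g s) (u : V) :
    0 ≤ util g s u := by
  unfold util
  refine Finset.sum_nonneg fun x _ => ?_
  split_ifs
  · exact g.f_nonneg _ _ _ _ (hs.1 _ _) (hs.1 _ _)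
  · exact le_rfl

lemma charge_bound (b w k m t : ℝ) (hb : 0 ≤ b) (ht : 0 ≤ t) (htb : t ≤ b) (hk : 0 < k)
    (hm : m ≤ t) (h : k * b ≤ w) : k * m ≤ t * (w / b) := by
  rcases hb.eq_or_lt with rfl | hb
  · have : t = 0 := le_antisymm htb ht
    subst this
    simp only [zero_mul]
    nlinarith
  · have h1 : k ≤ w / b := (le_div_iff₀ hb).2 h
    nlinarith

/-- with rewards `f_e(x,y) = c_e·min(x,y)`, `c_e > 0`, the price
of anarchy for pairwise equilibria is at most 2. -/
theorem poa_linear_min_le_two (g : NCGame V)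
    (c : V → V → ℝ) (hc : ∀ u v, g.Adj u v → 0 < c u v)
    (hf : ∀ u v, g.Adj u v → ∀ x y, g.f u v x y = c u v * min x y)
    (s : V → V → ℝ) (hs : IsPairwiseEq g s)
    (sStar : V → V → ℝ) (hStar : validState g sStar) :
    welfare g sStar ≤ 2 * welfare g s := by
  classical
  have hval := hs.1.1
  have key : ∀ u v, (if g.Adj u v then g.f u v (sStar u v) (sStar v u) else 0) ≤
      sStar u v * (util g s u / g.B u) + sStar v u * (util g s v / g.B v) := by
    intro u v
    have hn : ∀ u v, 0 ≤ sStar u v * (util g s u / g.B u) := fun u v =>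
      mul_nonneg (hStar.1 u v) (div_nonneg (util_nonneg' g s hval u) (g.B_nonneg u))
    have hb : ∀ u v, sStar u v ≤ g.B u := fun u v =>
      (Finset.single_le_sum (f := sStar u) (fun x _ => hStar.1 u x) (mem_univ v)).trans
        (hStar.2.2 u)
    split_ifs with huv
    · rw [hf u v huv]
      rcases edge_charge g c hc hf s hs u v huv with h | h
      · linarith [hn v u, charge_bound _ _ _ _ _ (g.B_nonneg u) (hStar.1 u v) (hb u v)
          (hc u v huv) (min_le_left (sStar u v) (sStar v u)) h]
      · linarith [hn u v, charge_bound _ _ _ _ _ (g.B_nonneg v) (hStar.1 v u) (hb v u)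
          (hc u v huv) (min_le_right (sStar u v) (sStar v u)) h]
    · exact add_nonneg (hn u v) (hn v u)
  have hsum : ∑ u, ∑ v, sStar u v * (util g s u / g.B u) ≤ welfare g s := by
    unfold welfare
    refine Finset.sum_le_sum fun u _ => ?_
    rw [← Finset.sum_mul]
    have hw := util_nonneg' g s hval u
    rcases (g.B_nonneg u).eq_or_lt with hB | hB
    · rw [← hB]; simpa using hw
    · calc _ ≤ g.B u * (util g s u / g.B u) :=
            mul_le_mul_of_nonneg_right (hStar.2.2 u) (div_nonneg hw hB.le)
        _ = util g s u := by field_simp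
  calc welfare g sStar ≤ ∑ u, ∑ v, (sStar u v * (util g s u / g.B u)
        + sStar v u * (util g s v / g.B v)) := by
        unfold welfare
        refine Finset.sum_le_sum fun u _ => ?_
        rw [util]
        refine Finset.sum_le_sum fun v _ => ?_
        convert key u v
    _ = ∑ u, ∑ v, sStar u v * (util g s u / g.B u)
        + ∑ u, ∑ v, sStar u v * (util g s u / g.B u) := by
        simp only [Finset.sum_add_distrib]
        congr 1
        exact Finset.sum_comm
    _ ≤ 2 * welfare g s := by linarith
end

section
/- Consider a minimum effort game with uniform budgets (B_v = 1 for every player v) in which every function h_e is convex. Then every pairwise equilibrium s satisfies w(s*) ≤ 2·w(s) for every state s*; i.e., the price of anarchy for pairwise equilibria is at most 2. -/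
open Finset

variable {V : Type} [Fintype V] [DecidableEq V]

theorem util_ge_term (g : NCGame V) (s : V → V → ℝ) (hs : ∀ v u, 0 ≤ s v u) (u v : V)
    (huv : g.Adj u v) : g.f u v (s u v) (s v u) ≤ util g s u := by
  classical
  unfold util
  have := Finset.single_le_sum (f := fun x => if g.Adj u x then g.f u x (s u x) (s x u) else 0)
    (fun i _ => by
      split_ifs
      · exact g.f_nonneg _ _ _ _ (hs _ _) (hs _ _)
      · exact le_rfl) (Finset.mem_univ v)
  simpa [huv] using this

theorem util_nn (g : NCGame V) (s : V → V → ℝ) (hs : ∀ v u, 0 ≤ s v u) (u : V) :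
    0 ≤ util g s u := by
  classical
  unfold util
  refine Finset.sum_nonneg fun i _ => ?_
  split_ifs
  · exact g.f_nonneg _ _ _ _ (hs _ _) (hs _ _)
  · exact le_rfl

theorem pair_bound (g : NCGame V) (hB : ∀ v, g.B v = 1) (s : V → V → ℝ) (hs : IsPairwiseEq g s)
    (u v : V) (huv : g.Adj u v) : g.f u v 1 1 ≤ util g s u + util g s v := by
  have hne : u ≠ v := by
    rintro rfl
    exact g.adj_irrefl _ huv
  obtain ⟨⟨⟨hs0, hs1, hs2⟩, -⟩, hp⟩ := hs
  set t := Function.update (Function.update s u (Pi.single v 1)) v (Pi.single u 1) with ht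
  have htu : t u = Pi.single v 1 := by simp [ht, hne]
  have htv : t v = Pi.single u 1 := by simp [ht]
  have hto : ∀ x, x ≠ u → x ≠ v → t x = s x := by
    intro x h1 h2
    simp [ht, h1, h2]
  have hcase : ∀ P : V → Prop, P u → P v → (∀ x, x ≠ u → x ≠ v → P x) → ∀ x, P x := by
    intro P h1 h2 h3 x
    by_cases hx : x = u
    · exact hx ▸ h1
    by_cases hx' : x = v
    · exact hx' ▸ h2
    exact h3 x hx hx'
  have hnn : ∀ (a x : V), 0 ≤ (Pi.single a (1:ℝ) : V → ℝ) x := by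
    intro a x
    rw [Pi.single_apply]
    split_ifs <;> norm_num
  have ht0 : ∀ x y, 0 ≤ t x y := by
    refine hcase _ ?_ ?_ ?_
    · rw [htu]; exact hnn _
    · rw [htv]; exact hnn _
    · intro x h1 h2
      rw [hto x h1 h2]; exact hs0 x
  have hval : validState g t := by
    refine ⟨ht0, hcase _ ?_ ?_ ?_, hcase _ ?_ ?_ ?_⟩
    · intro y hy
      rw [htu, Pi.single_apply, if_neg]
      rintro rfl
      exact hy huv
    · intro y hy
      rw [htv, Pi.single_apply, if_neg]
      rintro rfl
      exact hy (g.adj_symm _ _ huv)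
    · intro x h1 h2
      rw [hto x h1 h2]; exact hs1 x
    · rw [htu, hB]; simp
    · rw [htv, hB]; simp
    · intro x h1 h2
      rw [hto x h1 h2]; exact hs2 x
  have hnot := hp u v _ _ hne hval
  have e1 := util_ge_term g t ht0 u v huv
  have e2 := util_ge_term g t ht0 v u (g.adj_symm _ _ huv)
  rw [htu, htv, Pi.single_eq_same, Pi.single_eq_same] at e1 e2
  rw [g.f_comm v u] at e2
  have n1 := util_nn g s hs0 u
  have n2 := util_nn g s hs0 v
  by_contra hc
  push Not at hc
  exact hnot ⟨by linarith, by linarith⟩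

/-- in minimum effort games with uniform budgets and convex
`h_e`, the price of anarchy for pairwise equilibria is at most 2. -/
theorem min_effort_convex_uniform_poa (g : NCGame V)
    (hB : ∀ v, g.B v = 1)
    (h : V → V → ℝ → ℝ)
    (hmin : ∀ u v, g.Adj u v → ∀ x y, g.f u v x y = h u v (min x y))
    (hmono : ∀ u v, g.Adj u v → MonotoneOn (h u v) (Set.Ici 0))
    (h0 : ∀ u v, g.Adj u v → h u v 0 = 0)
    (hconv : ∀ u v, g.Adj u v → ConvexOn ℝ (Set.Ici 0) (h u v))
    (s : V → V → ℝ) (hs : IsPairwiseEq g s)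
    (sStar : V → V → ℝ) (hStar : validState g sStar) :
    welfare g sStar ≤ 2 * welfare g s := by
  classical
  have hpb := pair_bound g hB s hs
  have hs0 := hs.1.1.1
  have hw := util_nn g s hs0
  obtain ⟨p0, p1, p2⟩ := hStar
  have hle1 : ∀ u v, sStar u v ≤ 1 := fun u v =>
    (Finset.single_le_sum (fun i _ => p0 u i) (Finset.mem_univ v)).trans ((p2 u).trans (hB u).le)
  have key : ∀ u v, (if g.Adj u v then g.f u v (sStar u v) (sStar v u) else 0)
      ≤ sStar u v * util g s u + sStar v u * util g s v := by
    intro u v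
    split_ifs with huv
    · set m := min (sStar u v) (sStar v u) with hm
      have m0 : 0 ≤ m := le_min (p0 _ _) (p0 _ _)
      have m1 : m ≤ 1 := (min_le_left _ _).trans (hle1 _ _)
      have hb := hpb u v huv
      rw [hmin u v huv, min_self] at hb
      rw [hmin u v huv, ← hm]
      have hc := (hconv u v huv).2 (x := 0) (y := 1) (by simp) (by simp)
        (sub_nonneg.2 m1) m0 (by ring)
      simp only [smul_eq_mul, h0 u v huv, mul_zero, mul_one, zero_add] at hc
      have a1 := mul_le_mul_of_nonneg_left hb m0
      have a2 := mul_le_mul_of_nonneg_right (min_le_left (sStar u v) (sStar v u)) (hw u)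
      have a3 := mul_le_mul_of_nonneg_right (min_le_right (sStar u v) (sStar v u)) (hw v)
      rw [← hm] at a2 a3
      linarith
    · exact add_nonneg (mul_nonneg (p0 _ _) (hw _)) (mul_nonneg (p0 _ _) (hw _))
  have hsum : ∑ u, ∑ v, sStar u v * util g s u ≤ welfare g s := by
    unfold welfare
    refine Finset.sum_le_sum fun u _ => ?_
    rw [← Finset.sum_mul]
    exact mul_le_of_le_one_left (hw u) ((p2 u).trans (hB u).le)
  calc welfare g sStar
      ≤ ∑ u, ∑ v, (sStar u v * util g s u + sStar v u * util g s v) :=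
        Finset.sum_le_sum fun u _ => by
          unfold util
          exact Finset.sum_le_sum fun v _ => key u v
    _ = ∑ u, ∑ v, sStar u v * util g s u + ∑ u, ∑ v, sStar u v * util g s u := by
        simp only [Finset.sum_add_distrib]
        congr 1
        exact Finset.sum_comm
    _ ≤ 2 * welfare g s := by linarith
end
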